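/- arXiv:2202.10383 — 4 statements merged into one kernel-verified Lean document; each statement's English description precedes it below -/
import Mathlib

section
/- The hypothesis-free scheme with conclusion ∀x∀y z≡t → ∀y∀x z≡t (where x, y, z, t are four distinct variable metavariables) and no DV conditions is not supertrue; consequently, the scheme ALLcomm (∀x∀yφ → ∀y∀xφ) is not supertrue. -/
set_option autoImplicit false

/-! ## Megill-style scheme-level formalization of first-order logic -/

/-- Metavariables: variable metavariables `vr i` (standing for x_i) and
formula metavariables `fm i` (standing for φ_i). -/
inductive MV : Type
  | vr (i : ℕ) : MV
  | fm (i : ℕ) : MV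
  deriving DecidableEq

/-- Metaformulas over the pure language of equality. -/
inductive MF : Type
  | phi (i : ℕ) : MF
  | eq (i j : ℕ) : MF
  | imp (a b : MF) : MF
  | not (a : MF) : MF
  | all (i : ℕ) (a : MF) : MF
  deriving DecidableEq

/-- The set of metavariables occurring in a metaformula. -/
def MF.OC : MF → Set MV
  | .phi i => {MV.fm i}
  | .eq i j => {MV.vr i, MV.vr j}
  | .imp a b => a.OC ∪ b.OC
  | .not a => a.OC
  | .all i a => insert (MV.vr i) a.OC

/-- A scheme: finitely many hypotheses, a conclusion, and disjoint-variable
(DV) conditions given as unordered pairs of metavariables. -/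
structure Scheme : Type where
  hyps : Finset MF
  concl : MF
  dv : Set (Sym2 MV)

/-- Metavariables occurring in a scheme (in its hypotheses or conclusion). -/
def Scheme.OC (Φ : Scheme) : Set MV :=
  {m | ∃ h ∈ Φ.hyps, m ∈ h.OC} ∪ Φ.concl.OC

/-- A (type-preserving) substitution: variable metavariables go to variable
metavariables, formula metavariables go to metaformulas; it is the identity
outside a finite set. -/
structure Subst : Type where
  vr : ℕ → ℕ
  fm : ℕ → MF
  finVr : {i : ℕ | vr i ≠ i}.Finite
  finFm : {i : ℕ | fm i ≠ MF.phi i}.Finite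

/-- Action of a substitution on a metaformula. -/
def MF.substMF (σ : Subst) : MF → MF
  | .phi i => σ.fm i
  | .eq i j => .eq (σ.vr i) (σ.vr j)
  | .imp a b => .imp (a.substMF σ) (b.substMF σ)
  | .not a => .not (a.substMF σ)
  | .all i a => .all (σ.vr i) (a.substMF σ)

/-- The set of metavariables occurring in the image of a metavariable. -/
def Subst.appMV (σ : Subst) : MV → Set MV
  | .vr i => {MV.vr (σ.vr i)}
  | .fm i => (σ.fm i).OC

/-- σ is the identity on a given metavariable. -/
def Subst.Fixes (σ : Subst) : MV → Prop
  | .vr i => σ.vr i = i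
  | .fm i => σ.fm i = MF.phi i

/-- A substitution is legitimate on a scheme if it does not violate its
DV conditions. -/
def Subst.Legit (σ : Subst) (Φ : Scheme) : Prop :=
  ∀ m n : MV, s(m, n) ∈ Φ.dv → σ.appMV m ∩ σ.appMV n = ∅

/-- Propagation of DV conditions along a substitution. -/
def Subst.dvMap (σ : Subst) (D : Set (Sym2 MV)) : Set (Sym2 MV) :=
  {q | ∃ m' n' m n : MV, s(m', n') ∈ D ∧ m ∈ σ.appMV m' ∧ n ∈ σ.appMV n' ∧ q = s(m, n)}

/-- Action of a substitution on a scheme. -/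
def Scheme.substS (Φ : Scheme) (σ : Subst) : Scheme :=
  ⟨Φ.hyps.image (MF.substMF σ), Φ.concl.substMF σ, σ.dvMap Φ.dv⟩

/-- `Φ.Inst Ψ` : Ψ is an instance of Φ, i.e. the result of a legitimate
substitution, possibly followed by the addition of DV conditions. -/
def Scheme.Inst (Φ Ψ : Scheme) : Prop :=
  ∃ σ : Subst, σ.Legit Φ ∧ Ψ.hyps = Φ.hyps.image (MF.substMF σ) ∧
    Ψ.concl = Φ.concl.substMF σ ∧ σ.dvMap Φ.dv ⊆ Ψ.dv

/-- Metavariables occurring in a list of metaformulas. -/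
def listOC (P : List MF) : Set MV := {m | ∃ f ∈ P, m ∈ f.OC}

/-- The DV conditions of a proof `P` of the scheme `Φ`: those of `Φ`, plus all
pairs {m, n} where m is a dummy metavariable of `P` and n occurs in `P`. -/
def proofDV (Φ : Scheme) (P : List MF) : Set (Sym2 MV) :=
  Φ.dv ∪ {q | ∃ m n : MV, m ∈ listOC P ∧ m ∉ Φ.OC ∧ n ∈ listOC P ∧ q = s(m, n)}

/-- `P` is a proof of the scheme `Φ` from the set `S` of schemes. -/
def IsProof (S : Set Scheme) (Φ : Scheme) (P : List MF) : Prop :=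
  P ≠ [] ∧ P.getLast? = some Φ.concl ∧
  ∀ (k : ℕ) (hk : k < P.length),
    P.get ⟨k, hk⟩ ∈ Φ.hyps ∨
    ∃ hs : Finset MF,
      (∀ h ∈ hs, ∃ (l : ℕ) (hl : l < k), P.get ⟨l, hl.trans hk⟩ = h) ∧
      ∃ Ξ ∈ S, Ξ.Inst ⟨hs, P.get ⟨k, hk⟩, proofDV Φ P⟩

/-- `S ⊢ Φ` : the scheme `Φ` is provable from the set `S` of schemes. -/
def Provable (S : Set Scheme) (Φ : Scheme) : Prop := ∃ P : List MF, IsProof S Φ P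

/-! ## Object level: first-order formulas and semantics -/

/-- First-order formulas over the pure language of equality, with
individual variables v_i. -/
inductive FM : Type
  | eq (i j : ℕ) : FM
  | imp (a b : FM) : FM
  | not (a : FM) : FM
  | all (i : ℕ) (a : FM) : FM
  deriving DecidableEq

/-- Variables occurring in a first-order formula. -/
def FM.vars : FM → Set ℕ
  | .eq i j => {i, j}
  | .imp a b => a.vars ∪ b.vars
  | .not a => a.vars
  | .all i a => insert i a.vars

/-- An object-substitution: variable metavariables go to individual variables,
formula metavariables go to first-order formulas. -/
structure OSubst : Type where
  vr : ℕ → ℕ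
  fm : ℕ → FM

/-- Action of an object-substitution on a metaformula, yielding a first-order
formula (an object-instance). -/
def MF.osubst (τ : OSubst) : MF → FM
  | .phi i => τ.fm i
  | .eq i j => .eq (τ.vr i) (τ.vr j)
  | .imp a b => .imp (a.osubst τ) (b.osubst τ)
  | .not a => .not (a.osubst τ)
  | .all i a => .all (τ.vr i) (a.osubst τ)

/-- Variables occurring in the image of a metavariable. -/
def OSubst.appVars (τ : OSubst) : MV → Set ℕ
  | .vr i => {τ.vr i}
  | .fm i => (τ.fm i).vars

/-- An object-substitution is legitimate on a scheme if images of DV-paired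
metavariables share no variables. -/
def OSubst.Legit (τ : OSubst) (Φ : Scheme) : Prop :=
  ∀ m n : MV, s(m, n) ∈ Φ.dv → τ.appVars m ∩ τ.appVars n = ∅

/-- Evaluation of a first-order formula in a structure with domain `D`
(equality interpreted as equality) under an assignment `ρ`. -/
def FM.eval {D : Type} (ρ : ℕ → D) : FM → Prop
  | .eq i j => ρ i = ρ j
  | .imp a b => a.eval ρ → b.eval ρ
  | .not a => ¬ a.eval ρ
  | .all i a => ∀ d : D, a.eval (Function.update ρ i d)

/-- Validity of a first-order formula in the structure with domain `D`. -/
def FM.Valid (D : Type) (f : FM) : Prop := ∀ ρ : ℕ → D, f.eval ρ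

/-- A scheme is true if for every legitimate object-instance and every
nonempty domain, the conclusion is valid whenever all hypotheses are. -/
def Scheme.IsTrue (Φ : Scheme) : Prop :=
  ∀ τ : OSubst, τ.Legit Φ →
    ∀ D : Type, Nonempty D →
      (∀ h ∈ Φ.hyps, FM.Valid D (h.osubst τ)) → FM.Valid D (Φ.concl.osubst τ)

/-! ## (i,j)-transforms and supertruth -/

/-- Auxiliary: (i,j)-transform with a flag recording whether we are inside the
scope of a quantifier ∀x_i. -/
def MF.transfAux (i j : ℕ) : MF → Bool → MF
  | .phi k, _ => .phi k
  | .eq a b, ins =>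
      .eq (if ins = true ∧ a = j then i else a) (if ins = true ∧ b = j then i else b)
  | .imp a b, ins => .imp (a.transfAux i j ins) (b.transfAux i j ins)
  | .not a, ins => .not (a.transfAux i j ins)
  | .all k a, ins =>
      .all (if ins = true ∧ k = j then i else k) (a.transfAux i j (ins || decide (k = i)))

/-- The (i,j)-transform of a metaformula: replace every occurrence of x_j
lying within the scope of a quantifier ∀x_i by x_i. -/
def MF.transform (i j : ℕ) (f : MF) : MF := f.transfAux i j false

/-- The (i,j)-transform of a scheme: transform hypotheses and conclusion,
keep the DV conditions. -/
def Scheme.transform (i j : ℕ) (Φ : Scheme) : Scheme :=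
  ⟨Φ.hyps.image (MF.transform i j), Φ.concl.transform i j, Φ.dv⟩

/-- The (i,j)-transform (and the {i,j}-transform) is legitimate on a scheme
if {x_i, x_j} is not among its DV conditions. -/
def Scheme.TLegit (i j : ℕ) (Φ : Scheme) : Prop := s(MV.vr i, MV.vr j) ∉ Φ.dv

/-- A (hypothesis-free) scheme is presupertrue if all the legitimate
(i,j)-transforms of all its instances (including itself) are true. -/
def Scheme.PreST (Φ : Scheme) : Prop :=
  ∀ Ψ : Scheme, (Ψ = Φ ∨ Φ.Inst Ψ) → ∀ i j : ℕ, Ψ.TLegit i j → (Ψ.transform i j).IsTrue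

/-- A scheme is supertrue if every instance of it (including itself) satisfies:
whenever all legitimate (i,j)-transforms of all instances of each of its
hypotheses (taken as hypothesis-free schemes with the inherited DV conditions)
are true, all legitimate (i,j)-transforms of all instances of its conclusion
are true. -/
def Scheme.Supertrue (Φ : Scheme) : Prop :=
  ∀ Ψ : Scheme, (Ψ = Φ ∨ Φ.Inst Ψ) →
    (∀ h ∈ Ψ.hyps, Scheme.PreST ⟨∅, h, Ψ.dv⟩) → Scheme.PreST ⟨∅, Ψ.concl, Ψ.dv⟩

/-- The {i,j}-transform of a metaformula: the composite of the (i,j)-transform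
and the (j,i)-transform, the one with smaller first index performed first. -/
def MF.stransform (i j : ℕ) (f : MF) : MF :=
  if i ≤ j then (f.transform i j).transform j i else (f.transform j i).transform i j

/-- The {i,j}-transform of a scheme. -/
def Scheme.stransform (i j : ℕ) (Φ : Scheme) : Scheme :=
  ⟨Φ.hyps.image (MF.stransform i j), Φ.concl.stransform i j, Φ.dv⟩

/-- A metaformula contains no formula metavariables. -/
def MF.FmFree : MF → Prop
  | .phi _ => False
  | .eq _ _ => True
  | .imp a b => a.FmFree ∧ b.FmFree
  | .not a => a.FmFree
  | .all _ a => a.FmFree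

/-- A scheme contains no formula metavariables. -/
def Scheme.FmFree (Φ : Scheme) : Prop := (∀ h ∈ Φ.hyps, h.FmFree) ∧ Φ.concl.FmFree

/-- A (hypothesis-free) scheme is pre-semisupertrue if all the legitimate
{i,j}-transforms of all its instances (including itself) are true. -/
def Scheme.PreSST (Φ : Scheme) : Prop :=
  ∀ Ψ : Scheme, (Ψ = Φ ∨ Φ.Inst Ψ) → ∀ i j : ℕ, Ψ.TLegit i j → (Ψ.stransform i j).IsTrue

/-- A scheme is semisupertrue if it is true and every formula-metavariable-free
instance of it satisfies: whenever all legitimate {i,j}-transforms of all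
instances of each of its hypotheses are true, all legitimate {i,j}-transforms
of all instances of its conclusion are true. -/
def Scheme.Semisupertrue (Φ : Scheme) : Prop :=
  Φ.IsTrue ∧
  ∀ Ψ : Scheme, (Ψ = Φ ∨ Φ.Inst Ψ) → Ψ.FmFree →
    (∀ h ∈ Ψ.hyps, Scheme.PreSST ⟨∅, h, Ψ.dv⟩) → Scheme.PreSST ⟨∅, Ψ.concl, Ψ.dv⟩

/-- A metaformula is quantifier-free. -/
def MF.QFree : MF → Prop
  | .phi _ => True
  | .eq _ _ => True
  | .imp a b => a.QFree ∧ b.QFree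
  | .not a => a.QFree
  | .all _ _ => False

/-- A scheme is quantifier-free. -/
def Scheme.QFree (Φ : Scheme) : Prop := (∀ h ∈ Φ.hyps, h.QFree) ∧ Φ.concl.QFree

/-! ## The axiom schemes of the system TMM
(x = x_0, y = x_1, z = x_2; φ = φ_0, ψ = φ_1, χ = φ_2, θ = φ_3, τ = φ_4) -/

def ax_mp : Scheme := ⟨{.phi 0, .imp (.phi 0) (.phi 1)}, .phi 1, ∅⟩

def ax_minimp : Scheme :=
  ⟨∅, .imp (.phi 0) (.imp (.imp (.phi 1) (.phi 2))
      (.imp (.imp (.imp (.phi 3) (.phi 1)) (.imp (.phi 2) (.phi 4)))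
        (.imp (.phi 1) (.phi 4)))), ∅⟩

def ax_peirce : Scheme := ⟨∅, .imp (.imp (.imp (.phi 0) (.phi 1)) (.phi 0)) (.phi 0), ∅⟩

def ax_contrap : Scheme :=
  ⟨∅, .imp (.imp (.phi 0) (.not (.phi 1))) (.imp (.phi 1) (.not (.phi 0))), ∅⟩

def ax_notelim : Scheme := ⟨∅, .imp (.not (.phi 0)) (.imp (.phi 0) (.phi 1)), ∅⟩

def ax_gen : Scheme := ⟨{.phi 0}, .all 0 (.phi 0), ∅⟩

def ax_ALLdistr : Scheme :=
  ⟨∅, .imp (.all 0 (.imp (.phi 0) (.phi 1))) (.imp (.all 0 (.phi 0)) (.all 0 (.phi 1))), ∅⟩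

def ax_spec : Scheme := ⟨∅, .imp (.all 0 (.phi 0)) (.phi 0), ∅⟩

def ax_modal5 : Scheme :=
  ⟨∅, .imp (.not (.all 0 (.phi 0))) (.all 0 (.not (.all 0 (.phi 0)))), ∅⟩

def ax_vacGen : Scheme := ⟨∅, .imp (.phi 0) (.all 0 (.phi 0)), {s(MV.vr 0, MV.fm 0)}⟩

def ax_ALLcomm : Scheme :=
  ⟨∅, .imp (.all 0 (.all 1 (.phi 0))) (.all 1 (.all 0 (.phi 0))), ∅⟩

def ax_EQrefl : Scheme := ⟨∅, .eq 0 0, ∅⟩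

def ax_EQsymm : Scheme := ⟨∅, .imp (.eq 0 1) (.eq 1 0), ∅⟩

def ax_EQtrans : Scheme := ⟨∅, .imp (.eq 0 1) (.imp (.eq 1 2) (.eq 0 2)), ∅⟩

def ax_denot : Scheme :=
  ⟨∅, .imp (.eq 0 0) (.not (.all 1 (.not (.eq 1 0)))), {s(MV.vr 0, MV.vr 1)}⟩

def ax_subst : Scheme :=
  ⟨∅, .all 0 (.imp (.eq 0 1) (.imp (.phi 0) (.all 0 (.imp (.eq 0 1) (.phi 0))))),
    {s(MV.vr 0, MV.vr 1), s(MV.vr 1, MV.fm 0)}⟩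

def ax_ALLeq : Scheme :=
  ⟨∅, .imp (.all 0 (.eq 0 1)) (.imp (.all 0 (.phi 0)) (.all 1 (.phi 0))), ∅⟩

def ax_genEq : Scheme :=
  ⟨∅, .imp (.not (.all 0 (.eq 0 1)))
      (.imp (.not (.all 0 (.eq 0 2))) (.imp (.eq 1 2) (.all 0 (.eq 1 2)))), ∅⟩

def ax_modalD : Scheme := ⟨∅, .imp (.all 0 (.not (.phi 0))) (.not (.all 0 (.phi 0))), ∅⟩

def ax_modal4 : Scheme := ⟨∅, .imp (.all 0 (.phi 0)) (.all 0 (.all 0 (.phi 0))), ∅⟩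

/-- The system TMM. -/
def TMM : Set Scheme :=
  {ax_mp, ax_minimp, ax_peirce, ax_contrap, ax_notelim, ax_gen, ax_ALLdistr, ax_spec,
   ax_modal5, ax_vacGen, ax_ALLcomm, ax_EQrefl, ax_EQsymm, ax_EQtrans, ax_denot,
   ax_subst, ax_ALLeq, ax_genEq}

/-- The subsystem T. -/
def Tsys : Set Scheme :=
  {ax_mp, ax_minimp, ax_peirce, ax_contrap, ax_notelim, ax_gen, ax_ALLdistr, ax_vacGen,
   ax_EQrefl, ax_EQsymm, ax_EQtrans, ax_denot}

/-!
The `(x, y)`-transform of `∀x∀y z≡t → ∀y∀x z≡t` rewrites only the inner quantifier of the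
antecedent, giving `∀x∀x z≡t → ∀y∀x z≡t`. Without DV conditions, `y` and `z` may be mapped to the
same individual variable: it is then free in the antecedent but bound in the consequent, so the
object-instance fails in a structure with two elements, under an assignment giving that variable
and `t` the same value.
-/

/-- The metaformula `∀x∀y f → ∀y∀x f` expressing commutation of two universal quantifiers. The
conclusion of `ax_ALLcomm` is `MF.allComm 0 1 (.phi 0)`. -/
def MF.allComm (x y : ℕ) (f : MF) : MF :=
  .imp (.all x (.all y f)) (.all y (.all x f))

/-- The substitution replacing the single formula metavariable `φ_k` by `f`; it is used to form
instances of `ax_ALLcomm`. -/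
def Subst.singleFm (k : ℕ) (f : MF) : Subst where
  vr := id
  fm := Function.update MF.phi k f
  finVr := by simp
  finFm := (Set.finite_singleton k).subset fun _ hi ↦
    by_contra fun hik ↦ hi (Function.update_of_ne hik f MF.phi)

namespace Scheme

variable {Φ Ψ : Scheme}

lemma inst_of_dv_eq_empty (hdv : Φ.dv = ∅) (σ : Subst)
    (hhyps : Ψ.hyps = Φ.hyps.image (MF.substMF σ)) (hconcl : Ψ.concl = Φ.concl.substMF σ) :
    Φ.Inst Ψ := by
  refine ⟨σ, fun m n hmn ↦ ?_, hhyps, hconcl, ?_⟩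
  · simp [hdv] at hmn
  · rintro q ⟨m, n, -, -, hmn, -⟩
    simp [hdv] at hmn

lemma Supertrue.preST (hΦ : Φ.Supertrue) (hinst : Ψ = Φ ∨ Φ.Inst Ψ) (hhyps : Ψ.hyps = ∅) :
    Ψ.PreST := by
  obtain ⟨hyps, concl, dv⟩ := Ψ
  obtain rfl : hyps = ∅ := hhyps
  exact hΦ _ hinst (by simp)

lemma IsTrue.valid_osubst (hΦ : Φ.IsTrue) (hhyps : Φ.hyps = ∅) (hdv : Φ.dv = ∅) (τ : OSubst)
    (D : Type) [Nonempty D] : FM.Valid D (Φ.concl.osubst τ) :=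
  hΦ τ (fun m n hmn ↦ by simp [hdv] at hmn) D ‹_› (by simp [hhyps])

end Scheme

lemma MF.transform_allComm (x y : ℕ) (f : MF) :
    (MF.allComm x y f).transform x y =
      .imp (.all x (.all x (f.transfAux x y true))) (.all y (.all x (f.transfAux x y true))) := by
  simp [MF.allComm, MF.transform, MF.transfAux]

lemma FM.not_valid_all_all_eq_imp {D : Type} [Nontrivial D] {x y t : ℕ} (hxy : x ≠ y) (hxt : x ≠ t)
    (hyt : y ≠ t) :
    ¬ FM.Valid D (.imp (.all x (.all x (.eq y t))) (.all y (.all x (.eq y t)))) := by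
  intro hvalid
  obtain ⟨a, b, hab⟩ := exists_pair_ne D
  have antecedent : (FM.all x (.all x (.eq y t))).eval fun _ ↦ a := by
    simp [FM.eval, hxy.symm, hxt.symm]
  have hba : b = a := by
    simpa [FM.eval, hxy.symm, hxt.symm, hyt.symm] using hvalid _ antecedent b a
  exact hab hba.symm

lemma not_preST_allComm_eq {x y z t : ℕ} (hxy : x ≠ y) (hxz : x ≠ z) (hxt : x ≠ t) (hyz : y ≠ z)
    (hyt : y ≠ t) (hzt : z ≠ t) : ¬ Scheme.PreST ⟨∅, MF.allComm x y (.eq z t), ∅⟩ := by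
  intro hpre
  have htrue := hpre _ (.inl rfl) x y (Set.notMem_empty _)
  let τ : OSubst := ⟨Function.update id z y, fun _ ↦ .eq 0 0⟩
  have hvalid := htrue.valid_osubst rfl rfl τ Bool
  refine FM.not_valid_all_all_eq_imp (D := Bool) hxy hxt hyt ?_
  simpa [Scheme.transform, MF.transform_allComm, MF.transfAux, MF.osubst, τ, hxz, hyz, hyz.symm,
    hyt.symm, hzt.symm] using hvalid

lemma ax_ALLcomm_inst (f : MF) : ax_ALLcomm.Inst ⟨∅, MF.allComm 0 1 f, ∅⟩ :=
  Scheme.inst_of_dv_eq_empty rfl (Subst.singleFm 0 f) rfl rfl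

/-- The instance ∀x∀y z≡t → ∀y∀x z≡t of ALLcomm (with no DV conditions)
is not supertrue; consequently ALLcomm is not supertrue. -/
theorem ALLcomm_not_supertrue :
    ¬ Scheme.Supertrue
        ⟨∅, .imp (.all 0 (.all 1 (.eq 2 3))) (.all 1 (.all 0 (.eq 2 3))), ∅⟩ ∧
    ¬ ax_ALLcomm.Supertrue := by
  have not_preST : ¬ Scheme.PreST ⟨∅, MF.allComm 0 1 (.eq 2 3), ∅⟩ := by
    apply not_preST_allComm_eq <;> decide
  constructor
  · exact fun h ↦ not_preST (h.preST (.inl rfl) rfl)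
  · exact fun h ↦ not_preST (h.preST (.inr (ax_ALLcomm_inst _)) rfl)
end

section
/- Let ALLcomm′ denote the scheme obtained from ALLcomm (∀x∀yφ → ∀y∀xφ) by adding the DV condition {x,y}. Then the scheme ALLcomm is not provable from (TMM ∖ {spec, ALLcomm, ALLeq}) ∪ {ALLcomm′}; in particular, ALLcomm is independent in the axiom system TMM ∖ {spec, ALLeq}, i.e., it is not provable from TMM ∖ {spec, ALLcomm, ALLeq}. -/
set_option autoImplicit false

/-- ALLcomm weakened by the DV condition {x, y}. -/
def ax_ALLcomm' : Scheme :=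
  ⟨∅, .imp (.all 0 (.all 1 (.phi 0))) (.all 1 (.all 0 (.phi 0))),
    {s(MV.vr 0, MV.vr 1)}⟩

/-!
The DV conditions of a proof of ALLcomm never relate two metavariables of ALLcomm itself. Hence
ALLcomm′ and the axioms other than spec, ALLcomm and ALLeq cannot notice if each `x_1` in the scope
of a quantifier `∀x_0` is read as `x_0`, even when `φ_0` stands for a property of `x_1`: where this
reading could break an axiom, a DV condition (or, in genEq, an antecedent) excludes the clash. Under
it ALLcomm becomes `∀x_0∀x_0 φ_0 → ∀x_1∀x_0 φ_0`, whose antecedent only says that `x_1` has the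
property, and whose consequent says that everything has it.
-/

section Provability

variable {S T : Set Scheme} {Φ : Scheme} {P : List MF}

/-- A predicate `V` on metaformulas passes from the hypotheses to the conclusion of every instance
of `Ξ` whose DV conditions are among `𝒟`. -/
def Scheme.Preserves (Ξ : Scheme) (𝒟 : Set (Sym2 MV)) (V : MF → Prop) : Prop :=
  ∀ σ : Subst, σ.Legit Ξ → σ.dvMap Ξ.dv ⊆ 𝒟 →
    (∀ h ∈ Ξ.hyps, V (h.substMF σ)) → V (Ξ.concl.substMF σ)

theorem Provable.mono (hST : S ⊆ T) : Provable S Φ → Provable T Φ := by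
  rintro ⟨P, hne, hlast, hstep⟩
  refine ⟨P, hne, hlast, fun k hk ↦ (hstep k hk).imp_right ?_⟩
  rintro ⟨hs, hprev, Ξ, hΞ, hinst⟩
  exact ⟨hs, hprev, Ξ, hST hΞ, hinst⟩

theorem IsProof.forall_mem_of_preserves {V : MF → Prop} (hP : IsProof S Φ P)
    (hS : ∀ Ξ ∈ S, Ξ.Preserves (proofDV Φ P) V) (hΦ : ∀ h ∈ Φ.hyps, V h) :
    ∀ f ∈ P, V f := by
  have valid_get : ∀ (k : ℕ) (hk : k < P.length), V (P.get ⟨k, hk⟩) := by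
    intro k
    induction k using Nat.strong_induction_on with
    | _ k ih =>
      intro hk
      obtain hhyp | ⟨hs, hprev, Ξ, hΞ, σ, hlegit, rfl, hconcl, hdv⟩ := hP.2.2 k hk
      · exact hΦ _ hhyp
      · rw [show P.get ⟨k, hk⟩ = Ξ.concl.substMF σ from hconcl]
        refine hS Ξ hΞ σ hlegit hdv fun h hh ↦ ?_
        obtain ⟨l, hl, hget⟩ := hprev _ (Finset.mem_image_of_mem _ hh)
        exact hget ▸ ih l hl (hl.trans hk)
  intro f hf
  obtain ⟨n, rfl⟩ := List.mem_iff_get.1 hf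
  exact valid_get n n.2

theorem IsProof.concl_of_preserves {V : MF → Prop} (hP : IsProof S Φ P)
    (hS : ∀ Ξ ∈ S, Ξ.Preserves (proofDV Φ P) V) (hΦ : ∀ h ∈ Φ.hyps, V h) : V Φ.concl :=
  hP.forall_mem_of_preserves hS hΦ _ (List.mem_of_getLast? hP.2.1)

theorem mem_dv_of_mem_proofDV {m n : MV} (hm : m ∈ Φ.OC) (hn : n ∈ Φ.OC)
    (h : s(m, n) ∈ proofDV Φ P) : s(m, n) ∈ Φ.dv := by
  obtain h | ⟨dummy, other, -, hdummy, -, heq⟩ := h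
  · exact h
  · obtain ⟨rfl, -⟩ | ⟨-, rfl⟩ := Sym2.eq_iff.1 heq
    · exact absurd hm hdummy
    · exact absurd hn hdummy

end Provability

section Apart

variable {𝒟 : Set (Sym2 MV)} {m n : MV}

/-- Distinct metavariables related by the DV conditions `𝒟`. Distinctness has to be asked for
because the DV conditions of a proof contain the pair `{m, m}` for each dummy metavariable `m`. -/
def Apart (𝒟 : Set (Sym2 MV)) (m n : MV) : Prop := m ≠ n ∧ s(m, n) ∈ 𝒟

theorem Apart.symm (h : Apart 𝒟 m n) : Apart 𝒟 n m :=
  ⟨h.1.symm, Sym2.eq_swap ▸ h.2⟩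

theorem Subst.Legit.apart {σ : Subst} {Ξ : Scheme} (hσ : σ.Legit Ξ) (h𝒟 : σ.dvMap Ξ.dv ⊆ 𝒟)
    {p q : MV} (hpq : s(p, q) ∈ Ξ.dv) (hm : m ∈ σ.appMV p) (hn : n ∈ σ.appMV q) :
    Apart 𝒟 m n := by
  refine ⟨?_, h𝒟 ⟨p, q, m, n, hpq, hm, hn, rfl⟩⟩
  rintro rfl
  exact Set.notMem_empty m (hσ p q hpq ▸ ⟨hm, hn⟩)

end Apart

section ScopeRename

variable {i j k l : ℕ} {𝒟 : Set (Sym2 MV)}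

/-- The action of the `(i, j)`-transform on the index of a variable metavariable; the flag `ins`
tells whether the occurrence lies in the scope of a quantifier `∀x_i`, as in `MF.transfAux`. -/
def scopeRename (i j : ℕ) (ins : Bool) (a : ℕ) : ℕ := if ins = true ∧ a = j then i else a

theorem scopeRename_or_self (ins : Bool) :
    scopeRename i j (ins || decide (k = i)) k = scopeRename i j ins k := by
  by_cases hk : k = i
  · simp only [scopeRename, hk, ite_self]
  · simp only [hk, decide_false, Bool.or_false]

theorem scopeRename_or (h : k = i → l ≠ j) (ins : Bool) :
    scopeRename i j (ins || decide (k = i)) l = scopeRename i j ins l := by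
  by_cases hk : k = i
  · simp only [scopeRename, h hk, and_false, if_false]
  · simp only [hk, decide_false, Bool.or_false]

theorem scopeRename_or_of_ne {ins : Bool}
    (h : scopeRename i j (ins || decide (k = i)) l ≠ scopeRename i j ins k) :
    scopeRename i j (ins || decide (k = i)) l = scopeRename i j ins l := by
  refine scopeRename_or ?_ ins
  rintro rfl rfl
  simp [scopeRename] at h

theorem scopeRename_or_of_apart (hij : ¬ Apart 𝒟 (.vr i) (.vr j))
    (hkl : Apart 𝒟 (.vr k) (.vr l)) (ins : Bool) :
    scopeRename i j (ins || decide (k = i)) l = scopeRename i j ins l := by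
  refine scopeRename_or ?_ ins
  rintro rfl rfl
  exact hij hkl

theorem scopeRename_ne_of_apart (hij : ¬ Apart 𝒟 (.vr i) (.vr j))
    (hkl : Apart 𝒟 (.vr k) (.vr l)) (ins : Bool) :
    scopeRename i j ins k ≠ scopeRename i j ins l := by
  have hne : k ≠ l := fun h ↦ hkl.1 (congrArg MV.vr h)
  unfold scopeRename
  split_ifs with hk hl hl
  · exact absurd (hk.2.trans hl.2.symm) hne
  · rintro rfl
    exact hij (hk.2 ▸ hkl.symm)
  · rintro rfl
    exact hij (hl.2 ▸ hkl)
  · exact hne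

end ScopeRename

namespace MF

variable {D : Type*}

/-- Tarskian truth of a metaformula in the domain `D` under the assignment `ρ`, the formula
metavariable `φ_k` being interpreted as the predicate `I k` of the assignment. -/
def eval (I : ℕ → (ℕ → D) → Prop) : MF → (ℕ → D) → Prop
  | .phi k, ρ => I k ρ
  | .eq a b, ρ => ρ a = ρ b
  | .imp a b, ρ => a.eval I ρ → b.eval I ρ
  | .not a, ρ => ¬ a.eval I ρ
  | .all k a, ρ => ∀ d : D, a.eval I (Function.update ρ k d)

/-- Validity of the `(i, j)`-transform of a metaformula. Both values of the flag are required, so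
that validity survives generalization over `x_i`. -/
def TransformValid (i j : ℕ) (I : ℕ → (ℕ → D) → Prop) (f : MF) : Prop :=
  ∀ (ins : Bool) (ρ : ℕ → D), (f.transfAux i j ins).eval I ρ

/-- The interpretation `I` of the formula metavariables is compatible with the `(i, j)`-transform
and the DV conditions `𝒟`: `x_i` and `x_j` are not apart, and a formula metavariable apart from
`x_k` is interpreted independently of whatever `x_k` is renamed to. -/
structure Respects (i j : ℕ) (I : ℕ → (ℕ → D) → Prop) (𝒟 : Set (Sym2 MV)) : Prop where
  not_apart : ¬ Apart 𝒟 (.vr i) (.vr j)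
  interp_update : ∀ {k n : ℕ}, Apart 𝒟 (.vr k) (.fm n) → ∀ (ins : Bool) (ρ : ℕ → D) (d : D),
    I n (Function.update ρ (scopeRename i j ins k) d) ↔ I n ρ

variable {i j k l m : ℕ} {I : ℕ → (ℕ → D) → Prop} {𝒟 : Set (Sym2 MV)} {f g : MF}
  {ins : Bool} {ρ : ℕ → D}

theorem eval_transfAux_eq :
    ((MF.eq k l).transfAux i j ins).eval I ρ ↔
      ρ (scopeRename i j ins k) = ρ (scopeRename i j ins l) :=
  Iff.rfl

theorem eval_transfAux_imp :
    ((f.imp g).transfAux i j ins).eval I ρ ↔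
      ((f.transfAux i j ins).eval I ρ → (g.transfAux i j ins).eval I ρ) :=
  Iff.rfl

theorem eval_transfAux_not :
    (f.not.transfAux i j ins).eval I ρ ↔ ¬ (f.transfAux i j ins).eval I ρ :=
  Iff.rfl

theorem eval_transfAux_all :
    ((MF.all k f).transfAux i j ins).eval I ρ ↔
      ∀ d, (f.transfAux i j (ins || decide (k = i))).eval I
        (Function.update ρ (scopeRename i j ins k) d) :=
  Iff.rfl

theorem Respects.eval_transfAux_update (hI : Respects i j I 𝒟)
    (hf : ∀ n ∈ f.OC, Apart 𝒟 (.vr k) n) (ins : Bool) (ρ : ℕ → D) (d : D) :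
    (f.transfAux i j (ins || decide (k = i))).eval I
      (Function.update ρ (scopeRename i j ins k) d) ↔ (f.transfAux i j ins).eval I ρ := by
  have rename_or {l : ℕ} (hl : Apart 𝒟 (.vr k) (.vr l)) (b : Bool) :=
    scopeRename_or_of_apart hI.not_apart hl b
  have rename_ne {l : ℕ} (hl : Apart 𝒟 (.vr k) (.vr l)) (b : Bool) :=
    scopeRename_ne_of_apart hI.not_apart hl b
  induction f generalizing ins ρ with
  | phi n => exact hI.interp_update (hf _ rfl) ins ρ d
  | eq a b =>
    have ha := hf (.vr a) (Or.inl rfl)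
    have hb := hf (.vr b) (Or.inr rfl)
    rw [eval_transfAux_eq, eval_transfAux_eq, rename_or ha, rename_or hb,
      Function.update_of_ne (rename_ne ha ins).symm, Function.update_of_ne (rename_ne hb ins).symm]
  | imp a b iha ihb =>
    exact imp_congr (iha (fun n hn ↦ hf n (Or.inl hn)) ins ρ)
      (ihb (fun n hn ↦ hf n (Or.inr hn)) ins ρ)
  | not a iha => exact not_congr (iha hf ins ρ)
  | all l a iha =>
    have hl := hf (.vr l) (Or.inl rfl)
    rw [eval_transfAux_all, eval_transfAux_all]
    refine forall_congr' fun e ↦ ?_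
    rw [rename_or hl, Function.update_comm (rename_ne hl ins), Bool.or_right_comm,
      ← scopeRename_or_of_apart hI.not_apart hl.symm ins]
    exact iha (fun n hn ↦ hf n (Or.inr hn)) _ _

namespace TransformValid

theorem mp (hf : TransformValid i j I f) (hfg : TransformValid i j I (f.imp g)) :
    TransformValid i j I g :=
  fun ins ρ ↦ hfg ins ρ (hf ins ρ)

theorem gen (k : ℕ) (hf : TransformValid i j I f) : TransformValid i j I (.all k f) :=
  fun _ _ _ ↦ hf _ _

theorem minimp (f g h p q : MF) : TransformValid i j I
    (f.imp ((g.imp h).imp (((p.imp g).imp (h.imp q)).imp (g.imp q)))) :=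
  fun _ _ _ hgh hpgq hg ↦ hpgq (fun _ ↦ hg) (hgh hg)

theorem peirce (f g : MF) : TransformValid i j I (((f.imp g).imp f).imp f) :=
  fun _ _ ↦ _root_.peirce _ _

theorem contrap (f g : MF) : TransformValid i j I ((f.imp g.not).imp (g.imp f.not)) :=
  fun _ _ hfg hg hf ↦ hfg hf hg

theorem notelim (f g : MF) : TransformValid i j I (f.not.imp (f.imp g)) :=
  fun _ _ hnf hf ↦ (hnf hf).elim

theorem allDistr (k : ℕ) (f g : MF) :
    TransformValid i j I ((MF.all k (f.imp g)).imp ((MF.all k f).imp (.all k g))) :=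
  fun _ _ hfg hf d ↦ hfg d (hf d)

theorem modal5 (k : ℕ) (f : MF) :
    TransformValid i j I ((MF.all k f).not.imp (.all k (MF.all k f).not)) := by
  intro ins ρ
  simp only [eval_transfAux_imp, eval_transfAux_all, eval_transfAux_not, scopeRename_or_self,
    Bool.or_assoc, Bool.or_self, Function.update_idem]
  exact fun h _ ↦ h

theorem vacGen (hI : Respects i j I 𝒟) (hf : ∀ n ∈ f.OC, Apart 𝒟 (.vr k) n) :
    TransformValid i j I (f.imp (.all k f)) :=
  fun ins ρ h d ↦ (hI.eval_transfAux_update hf ins ρ d).2 h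

theorem allComm (hij : ¬ Apart 𝒟 (.vr i) (.vr j)) (hkl : Apart 𝒟 (.vr k) (.vr l)) (f : MF) :
    TransformValid i j I ((MF.all k (.all l f)).imp (.all l (.all k f))) := by
  intro ins ρ
  simp only [eval_transfAux_imp, eval_transfAux_all, scopeRename_or_of_apart hij hkl,
    scopeRename_or_of_apart hij hkl.symm]
  intro h d e
  rw [Function.update_comm (scopeRename_ne_of_apart hij hkl.symm ins), Bool.or_right_comm]
  exact h e d

theorem eqRefl (k : ℕ) : TransformValid i j I (.eq k k) :=
  fun _ _ ↦ rfl

theorem eqSymm (k l : ℕ) : TransformValid i j I ((MF.eq k l).imp (.eq l k)) :=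
  fun _ _ ↦ Eq.symm

theorem eqTrans (k l m : ℕ) :
    TransformValid i j I ((MF.eq k l).imp ((MF.eq l m).imp (.eq k m))) :=
  fun _ _ ↦ Eq.trans

theorem denot (hij : ¬ Apart 𝒟 (.vr i) (.vr j)) (hkl : Apart 𝒟 (.vr k) (.vr l)) :
    TransformValid i j I ((MF.eq k k).imp (MF.all l (MF.eq l k).not).not) := by
  intro ins ρ
  simp only [eval_transfAux_imp, eval_transfAux_not, eval_transfAux_all, eval_transfAux_eq,
    scopeRename_or_self, scopeRename_or_of_apart hij hkl.symm, Function.update_self,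
    Function.update_of_ne (scopeRename_ne_of_apart hij hkl ins)]
  exact fun _ hne ↦ hne _ rfl

theorem subst (hij : ¬ Apart 𝒟 (.vr i) (.vr j)) (hkl : Apart 𝒟 (.vr k) (.vr l)) (f : MF) :
    TransformValid i j I
      (.all k ((MF.eq k l).imp (f.imp (.all k ((MF.eq k l).imp f))))) := by
  intro ins ρ
  simp only [eval_transfAux_all, eval_transfAux_imp, eval_transfAux_eq, scopeRename_or_self,
    scopeRename_or_of_apart hij hkl, Bool.or_assoc, Bool.or_self, Function.update_idem,
    Function.update_self, Function.update_of_ne (scopeRename_ne_of_apart hij hkl ins).symm]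
  rintro _ rfl hf _ rfl
  exact hf

theorem genEq (k l m : ℕ) : TransformValid i j I
    ((MF.all k (.eq k l)).not.imp
      ((MF.all k (.eq k m)).not.imp ((MF.eq l m).imp (.all k (.eq l m))))) := by
  intro ins ρ hl hm hlm
  -- If `∀x_k x_k ≡ x_n` fails, then the quantifier `∀x_k` neither renames nor binds `x_n`.
  have unaffected : ∀ n, ¬ ((MF.all k (.eq k n)).transfAux i j ins).eval I ρ →
      scopeRename i j (ins || decide (k = i)) n = scopeRename i j ins n ∧
        scopeRename i j ins n ≠ scopeRename i j ins k := by
    intro n hn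
    have hne : scopeRename i j (ins || decide (k = i)) n ≠ scopeRename i j ins k := by
      intro h
      refine hn fun e ↦ ?_
      rw [eval_transfAux_eq, scopeRename_or_self, h]
    exact ⟨scopeRename_or_of_ne hne, scopeRename_or_of_ne hne ▸ hne⟩
  obtain ⟨hl_rename, hl_ne⟩ := unaffected l hl
  obtain ⟨hm_rename, hm_ne⟩ := unaffected m hm
  rw [eval_transfAux_all]
  intro d
  rw [eval_transfAux_eq, hl_rename, hm_rename, Function.update_of_ne hl_ne,
    Function.update_of_ne hm_ne]
  exact hlm

end TransformValid

end MF

section ALLcomm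

open MF

/-- The system TMM ∖ {spec, ALLcomm, ALLeq} extended by ALLcomm′. -/
def weakenedSystem : Set Scheme := (TMM \ {ax_spec, ax_ALLcomm, ax_ALLeq}) ∪ {ax_ALLcomm'}

theorem preserves_transformValid {D : Type*} {i j : ℕ} {I : ℕ → (ℕ → D) → Prop}
    {𝒟 : Set (Sym2 MV)} (hI : Respects i j I 𝒟) :
    ∀ Ξ ∈ weakenedSystem, Ξ.Preserves 𝒟 (TransformValid i j I) := by
  intro Ξ hΞ σ hσ h𝒟 hhyps
  have hij := hI.not_apart
  have apart {p q m n : MV} (hpq : s(p, q) ∈ Ξ.dv) (hm : m ∈ σ.appMV p) (hn : n ∈ σ.appMV q) :=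
    hσ.apart h𝒟 hpq hm hn
  simp only [weakenedSystem, TMM, Set.mem_union, Set.mem_sdiff, Set.mem_insert_iff,
    Set.mem_singleton_iff, not_or] at hΞ
  obtain ⟨rfl | rfl | rfl | rfl | rfl | rfl | rfl | rfl | rfl | rfl | rfl | rfl | rfl | rfl | rfl |
    rfl | rfl | rfl, hspec, hcomm, heq⟩ | rfl := hΞ
  · exact .mp (hhyps (.phi 0) (Finset.mem_insert_self _ _))
      (hhyps (.imp (.phi 0) (.phi 1)) (by simp [ax_mp]))
  · exact .minimp _ _ _ _ _
  · exact .peirce _ _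
  · exact .contrap _ _
  · exact .notelim _ _
  · exact .gen _ (hhyps (.phi 0) (Finset.mem_singleton_self _))
  · exact .allDistr _ _ _
  · exact absurd rfl hspec
  · exact .modal5 _ _
  · exact .vacGen hI fun n hn ↦ apart (p := .vr 0) (q := .fm 0) rfl rfl hn
  · exact absurd rfl hcomm
  · exact .eqRefl _
  · exact .eqSymm _ _
  · exact .eqTrans _ _ _
  · exact .denot hij (apart (p := .vr 0) (q := .vr 1) rfl rfl rfl)
  · exact .subst hij (apart (p := .vr 0) (q := .vr 1) (Or.inl rfl) rfl rfl) _
  · exact absurd rfl heq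
  · exact .genEq _ _ _
  · exact .allComm hij (apart (p := .vr 0) (q := .vr 1) rfl rfl rfl) _

/-- The interpretation refuting ALLcomm over the domain `Bool`: `φ_0` says that `x_1` is `true`,
and the other formula metavariables are true. -/
def refutingInterp (n : ℕ) (ρ : ℕ → Bool) : Prop := n = 0 → ρ 1 = true

theorem notMem_proofDV_ALLcomm {P : List MF} {m n : MV} (hm : m ∈ ax_ALLcomm.OC)
    (hn : n ∈ ax_ALLcomm.OC) : s(m, n) ∉ proofDV ax_ALLcomm P :=
  fun h ↦ mem_dv_of_mem_proofDV hm hn h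

theorem respects_refutingInterp (P : List MF) :
    Respects 0 1 refutingInterp (proofDV ax_ALLcomm P) := by
  have vr_mem : ∀ k < 2, MV.vr k ∈ ax_ALLcomm.OC := by
    intro k hk
    interval_cases k <;> simp [ax_ALLcomm, Scheme.OC, OC]
  have fm_mem : MV.fm 0 ∈ ax_ALLcomm.OC := by simp [ax_ALLcomm, Scheme.OC, OC]
  refine ⟨fun h ↦ notMem_proofDV_ALLcomm (vr_mem 0 (by decide)) (vr_mem 1 (by decide)) h.2, ?_⟩
  intro k n h ins ρ d
  refine forall_congr' fun hn ↦ ?_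
  have hk : 2 ≤ k := by
    by_contra! hk
    exact notMem_proofDV_ALLcomm (vr_mem k hk) (hn ▸ fm_mem) h.2
  have hrename : scopeRename 0 1 ins k = k := if_neg (by omega)
  rw [hrename, Function.update_of_ne (by omega)]

theorem not_transformValid_ALLcomm : ¬ TransformValid 0 1 refutingInterp ax_ALLcomm.concl := by
  intro h
  have forall_forall : ((MF.all 0 (.all 1 (.phi 0))).transfAux 0 1 false).eval refutingInterp
      (fun _ ↦ true) := fun _ _ _ ↦ rfl
  exact Bool.false_ne_true (h false (fun _ ↦ true) forall_forall false false rfl)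

theorem not_provable_weakenedSystem_ALLcomm : ¬ Provable weakenedSystem ax_ALLcomm := by
  rintro ⟨P, hP⟩
  exact not_transformValid_ALLcomm <|
    hP.concl_of_preserves (preserves_transformValid (respects_refutingInterp P))
      fun _ h ↦ absurd h (Finset.notMem_empty _)

end ALLcomm

/-- In TMM ∖ {spec, ALLeq}, the scheme ALLcomm cannot be weakened by adding
the DV condition {x,y}: it is not provable even from the other axiom schemes
together with the weakened ALLcomm′; in particular, it is independent, i.e.,
not provable from TMM ∖ {spec, ALLcomm, ALLeq}. -/
theorem ALLcomm_cannot_be_weakened :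
    ¬ Provable ((TMM \ {ax_spec, ax_ALLcomm, ax_ALLeq}) ∪ {ax_ALLcomm'}) ax_ALLcomm ∧
    ¬ Provable (TMM \ {ax_spec, ax_ALLcomm, ax_ALLeq}) ax_ALLcomm := by
  exact ⟨not_provable_weakenedSystem_ALLcomm,
    fun h ↦ not_provable_weakenedSystem_ALLcomm (h.mono Set.subset_union_left)⟩
end

section
/- The hypothesis-free scheme with conclusion ∀x x≡y → x≡y (x, y distinct variable metavariables, no DV conditions) is true but not semisupertrue: its {x,y}-transform ∀x x≡x → x≡y is not true. -/
set_option autoImplicit false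

/-! The scheme is an instance of specialization, hence true. Its {x,y}-transform identifies `y` with
`x` in the antecedent only, because the consequent lies in the scope of no quantifier. The new
antecedent ∀x x≡x is true, so if the transform were true, modus ponens would make x≡y true. -/

theorem FM.eval_of_eval_all {D : Type} {ρ : ℕ → D} {i : ℕ} {a : FM} (h : (FM.all i a).eval ρ) :
    a.eval ρ := by
  simpa only [Function.update_eq_self] using h (ρ i)

theorem MF.stransform_all_eq_imp_eq (i j : ℕ) :
    MF.stransform i j (.imp (.all i (.eq i j)) (.eq i j)) =
      .imp (.all i (.eq i i)) (.eq i j) := by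
  rcases eq_or_ne i j with rfl | hij
  · simp [MF.stransform, MF.transform, MF.transfAux]
  · simp [MF.stransform, MF.transform, MF.transfAux, hij, hij.symm]

namespace Scheme

section Truth

variable {hyps : Finset MF} {dv : Set (Sym2 MV)} {a b : MF}

theorem isTrue_all_imp_self (hyps : Finset MF) (i : ℕ) (a : MF) (dv : Set (Sym2 MV)) :
    IsTrue ⟨hyps, .imp (.all i a) a, dv⟩ :=
  fun _ _ _ _ _ _ => FM.eval_of_eval_all

theorem isTrue_eq_self (hyps : Finset MF) (i : ℕ) (dv : Set (Sym2 MV)) :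
    IsTrue ⟨hyps, .eq i i, dv⟩ :=
  fun _ _ _ _ _ _ => rfl

theorem IsTrue.all (ha : IsTrue ⟨hyps, a, dv⟩) (i : ℕ) : IsTrue ⟨hyps, .all i a, dv⟩ :=
  fun τ hτ D hD hhyps ρ d => ha τ hτ D hD hhyps (Function.update ρ (τ.vr i) d)

theorem IsTrue.mp (hab : IsTrue ⟨hyps, .imp a b, dv⟩) (ha : IsTrue ⟨hyps, a, dv⟩) :
    IsTrue ⟨hyps, b, dv⟩ :=
  fun τ hτ D hD hhyps ρ => hab τ hτ D hD hhyps ρ (ha τ hτ D hD hhyps ρ)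

theorem not_isTrue_eq_of_ne {i j : ℕ} (hij : i ≠ j) : ¬ IsTrue ⟨∅, .eq i j, ∅⟩ := by
  intro htrue
  let τ : OSubst := ⟨id, fun _ => .eq 0 0⟩
  have hτ : τ.Legit ⟨∅, .eq i j, ∅⟩ := fun _ _ hmem => hmem.elim
  have hvalid : FM.Valid ℕ (.eq i j) := htrue τ hτ ℕ inferInstance (by simp)
  exact hij (hvalid id)

end Truth

theorem Semisupertrue.isTrue_stransform_concl {Φ : Scheme} (hΦ : Φ.Semisupertrue)
    (hfree : Φ.FmFree) (hhyps : ∀ h ∈ Φ.hyps, PreSST ⟨∅, h, Φ.dv⟩) {i j : ℕ}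
    (hij : Φ.TLegit i j) : IsTrue ⟨∅, Φ.concl.stransform i j, Φ.dv⟩ :=
  hΦ.2 Φ (Or.inl rfl) hfree hhyps _ (Or.inl rfl) i j hij

end Scheme

/-- The scheme ∀x x≡y → x≡y (no DV conditions) is true but not semisupertrue:
its {x,y}-transform ∀x x≡x → x≡y is not true. -/
theorem spec_instance_not_semisupertrue :
    Scheme.IsTrue ⟨∅, .imp (.all 0 (.eq 0 1)) (.eq 0 1), ∅⟩ ∧
    ¬ Scheme.Semisupertrue ⟨∅, .imp (.all 0 (.eq 0 1)) (.eq 0 1), ∅⟩ ∧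
    MF.stransform 0 1 (.imp (.all 0 (.eq 0 1)) (.eq 0 1)) =
      .imp (.all 0 (.eq 0 0)) (.eq 0 1) ∧
    ¬ Scheme.IsTrue ⟨∅, MF.stransform 0 1 (.imp (.all 0 (.eq 0 1)) (.eq 0 1)), ∅⟩ := by
  have not_true :
      ¬ Scheme.IsTrue ⟨∅, MF.stransform 0 1 (.imp (.all 0 (.eq 0 1)) (.eq 0 1)), ∅⟩ := by
    rw [MF.stransform_all_eq_imp_eq]
    intro htrue
    exact Scheme.not_isTrue_eq_of_ne zero_ne_one
      (htrue.mp ((Scheme.isTrue_eq_self ∅ 0 ∅).all 0))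
  refine ⟨Scheme.isTrue_all_imp_self ∅ 0 _ ∅, fun hsemi => not_true ?_,
    MF.stransform_all_eq_imp_eq 0 1, not_true⟩
  exact hsemi.isTrue_stransform_concl (by simp [Scheme.FmFree, MF.FmFree]) (by simp)
    (Set.notMem_empty _)
end

section
/- The rule of generalization gen (the scheme with single hypothesis φ, conclusion ∀x φ, and no DV conditions) is not provable from the set of axiom schemes TMM ∖ {gen}. -/
set_option autoImplicit false

/-!
Read the connectives, quantifiers and equality classically over a domain `D`, but let a formula
metavariable denote an arbitrary predicate of assignments, subject to the DV conditions. Every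
scheme of TMM other than gen then preserves truth at each single assignment, not merely validity,
and so does every scheme provable from them. The rule gen does not: over the domain `Bool`, let
`φ_0` say that the value of `x_0` is `true`, and assign `true` to `x_0`.
-/

/-- An interpretation of the formula metavariables as predicates of assignments. The variable
metavariables themselves play the role of the individual variables. -/
abbrev Interp (D : Type) : Type := ℕ → (ℕ → D) → Prop

/-- Truth of a metaformula at an assignment, the formula metavariables being interpreted by `I`. -/
def MF.Holds {D : Type} (I : Interp D) : MF → (ℕ → D) → Prop
  | .phi k, ρ => I k ρ
  | .eq i j, ρ => ρ i = ρ j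
  | .imp a b, ρ => a.Holds I ρ → b.Holds I ρ
  | .not a, ρ => ¬ a.Holds I ρ
  | .all i a, ρ => ∀ d : D, a.Holds I (Function.update ρ i d)

/-- The semantic counterpart of DV conditions: `φ_k` does not depend on `x_i` if `{x_i, φ_k}` is
among them. Pairs of variables and pairs of formula metavariables impose nothing. -/
def Interp.Respects {D : Type} (I : Interp D) (E : Set (Sym2 MV)) : Prop :=
  ∀ i k : ℕ, s(MV.vr i, MV.fm k) ∈ E → DependsOn (I k) {i}ᶜ

/-- A scheme is locally valid if its conclusion is true at every assignment at which its hypotheses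
are true, under all interpretations respecting its DV conditions. In `Scheme.IsTrue`, by contrast,
the hypotheses are assumed true at all assignments. -/
def Scheme.LocallyValid (Φ : Scheme) : Prop :=
  ∀ (D : Type) (I : Interp D), I.Respects Φ.dv →
    ∀ ρ : ℕ → D, (∀ h ∈ Φ.hyps, h.Holds I ρ) → Φ.concl.Holds I ρ

/-- A scheme is locally sound if all its substitution instances are locally valid. Local validity
of the scheme alone would not do, since a substitution may identify variables. -/
def Scheme.LocallySound (Ξ : Scheme) : Prop :=
  ∀ σ : Subst, σ.Legit Ξ → (Ξ.substS σ).LocallyValid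

/-! ### Dependence on the assignment -/

theorem piecewise_update_of_mem {ι : Type*} {π : ι → Type*} [DecidableEq ι] {s : Set ι}
    [DecidablePred (· ∈ s)] {i : ι} (hi : i ∈ s) (f g : ∀ i, π i) (a : π i) :
    s.piecewise (Function.update f i a) g = Function.update (s.piecewise f g) i a := by
  ext j
  rcases eq_or_ne j i with rfl | hj
  · simp [hi]
  · simp [Set.piecewise, hj]

theorem dependsOn_piecewise {ι : Type*} {π : ι → Type*} (s : Set ι) [DecidablePred (· ∈ s)]
    (g : ∀ i, π i) : DependsOn (fun f : ∀ i, π i ↦ s.piecewise f g) s := by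
  intro f f' hff'
  ext i
  by_cases hi : i ∈ s
  · simp [hi, hff' i hi]
  · simp [hi]

section Holds

variable {D : Type} {I J : Interp D} {s : Set ℕ}

theorem MF.holds_iff_holds_piecewise [DecidablePred (· ∈ s)] {η : ℕ → D} (a : MF)
    (hvr : ∀ i, MV.vr i ∈ a.OC → i ∈ s)
    (hfm : ∀ k, MV.fm k ∈ a.OC → ∀ ρ, I k ρ ↔ J k (s.piecewise ρ η)) (ρ : ℕ → D) :
    a.Holds I ρ ↔ a.Holds J (s.piecewise ρ η) := by
  induction a generalizing ρ with
  | phi k => exact hfm k rfl ρ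
  | eq i j =>
    have hi : i ∈ s := hvr i (Or.inl rfl)
    have hj : j ∈ s := hvr j (Or.inr rfl)
    simp [MF.Holds, hi, hj]
  | imp a b iha ihb =>
    exact imp_congr
      (iha (fun i hi ↦ hvr i (.inl hi)) (fun k hk ↦ hfm k (.inl hk)) ρ)
      (ihb (fun i hi ↦ hvr i (.inr hi)) (fun k hk ↦ hfm k (.inr hk)) ρ)
  | not a iha => exact not_congr (iha hvr hfm ρ)
  | all i a iha =>
    refine forall_congr' fun d ↦ ?_
    rw [← piecewise_update_of_mem (hvr i (.inl rfl))]
    exact iha (fun j hj ↦ hvr j (.inr hj)) (fun k hk ↦ hfm k (.inr hk)) _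

theorem MF.dependsOn_holds (a : MF) (hvr : ∀ i, MV.vr i ∈ a.OC → i ∈ s)
    (hfm : ∀ k, MV.fm k ∈ a.OC → DependsOn (I k) s) : DependsOn (a.Holds I) s := by
  classical
  intro ρ η hρη
  have hpiecewise : s.piecewise ρ η = η := by
    simpa only [Set.piecewise_same] using dependsOn_piecewise s η hρη
  have hholds : a.Holds I ρ ↔ a.Holds I (s.piecewise ρ η) :=
    a.holds_iff_holds_piecewise hvr
      (fun k hk ρ' ↦ Iff.of_eq (hfm k hk fun i hi ↦ (s.piecewise_eq_of_mem ρ' η hi).symm)) ρ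
  rw [hpiecewise] at hholds
  exact propext hholds

end Holds

/-! ### Inheritance of local soundness by provable schemes -/

section Soundness

variable {D : Type} {I : Interp D} {E F : Set (Sym2 MV)} {S : Set Scheme} {Φ Ψ Ξ : Scheme}

theorem Interp.Respects.mono (hI : I.Respects F) (hEF : E ⊆ F) : I.Respects E :=
  fun i k hik ↦ hI i k (hEF hik)

theorem Scheme.LocallySound.locallyValid_of_inst (hΞ : Ξ.LocallySound) (hinst : Ξ.Inst Ψ) :
    Ψ.LocallyValid := by
  obtain ⟨σ, hσ, hhyps, hconcl, hdv⟩ := hinst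
  intro D I hI ρ hρ
  rw [hconcl]
  rw [hhyps] at hρ
  exact hΞ σ hσ D I (hI.mono hdv) ρ hρ

theorem IsProof.holds {P : List MF} (hP : IsProof S Φ P) (hS : ∀ Ξ ∈ S, Ξ.LocallySound)
    (hI : I.Respects (proofDV Φ P)) {ρ : ℕ → D} (hρ : ∀ h ∈ Φ.hyps, h.Holds I ρ) :
    Φ.concl.Holds I ρ := by
  obtain ⟨-, hlast, hsteps⟩ := hP
  have hholds : ∀ (k : ℕ) (hk : k < P.length), (P.get ⟨k, hk⟩).Holds I ρ := by
    intro k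
    induction k using Nat.strong_induction_on with
    | _ k ih =>
      intro hk
      rcases hsteps k hk with hhyp | ⟨hs, hearlier, Ξ, hΞ, hinst⟩
      · exact hρ _ hhyp
      · refine (hS Ξ hΞ).locallyValid_of_inst hinst D I hI ρ fun h hh ↦ ?_
        obtain ⟨l, hl, rfl⟩ := hearlier h hh
        exact ih l hl _
  obtain ⟨n, hn⟩ := List.get_of_mem (List.mem_of_getLast? hlast)
  exact hn ▸ hholds n n.2

open scoped Classical in
/-- The interpretation agreeing with `I` on formulas in the metavariables `M`, but not depending on
the others: variables outside `M` keep the value assigned by `η`, and formula metavariables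
outside `M` are false. It makes any DV condition on the dummy metavariables of a proof harmless. -/
noncomputable def Interp.freeze (I : Interp D) (M : Set MV) (η : ℕ → D) : Interp D :=
  fun k ρ ↦ MV.fm k ∈ M ∧ I k ((MV.vr ⁻¹' M).piecewise ρ η)

variable {M : Set MV} {η : ℕ → D}

theorem MF.holds_freeze_iff {a : MF} (ha : a.OC ⊆ M) :
    a.Holds (I.freeze M η) η ↔ a.Holds I η := by
  classical
  have hholds := a.holds_iff_holds_piecewise (I := I.freeze M η) (J := I)
    (s := MV.vr ⁻¹' M) (η := η) (fun i hi ↦ ha hi) (fun k hk ρ ↦ and_iff_right (ha hk)) η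
  rwa [Set.piecewise_same] at hholds

theorem Interp.dependsOn_freeze {k : ℕ} {t : Set ℕ} (hI : DependsOn (I k) t) :
    DependsOn (I.freeze M η k) t := by
  classical
  intro ρ ρ' hρ
  refine congrArg (MV.fm k ∈ M ∧ ·) (hI fun i hi ↦ ?_)
  simp only [Set.piecewise, hρ i hi]

theorem Interp.dependsOn_freeze_compl_singleton {i k : ℕ} (hik : MV.vr i ∉ M ∨ MV.fm k ∉ M) :
    DependsOn (I.freeze M η k) {i}ᶜ := by
  classical
  intro ρ ρ' hρ
  rcases hik with hi | hk
  · have hpiecewise : (MV.vr ⁻¹' M).piecewise ρ η = (MV.vr ⁻¹' M).piecewise ρ' η :=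
      dependsOn_piecewise _ η fun j hj ↦ hρ j fun hji ↦ hi (hji ▸ hj)
    exact congrArg (fun ρ'' ↦ MV.fm k ∈ M ∧ I k ρ'') hpiecewise
  · simp [Interp.freeze, hk]

theorem Interp.Respects.freeze (hI : I.Respects Φ.dv) (P : List MF) (η : ℕ → D) :
    (I.freeze Φ.OC η).Respects (proofDV Φ P) := by
  rintro i k (hik | ⟨m, n, -, hm, -, hmn⟩)
  · exact dependsOn_freeze (hI i k hik)
  · refine dependsOn_freeze_compl_singleton ?_
    rcases Sym2.eq_iff.1 hmn with ⟨rfl, -⟩ | ⟨-, rfl⟩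
    exacts [.inl hm, .inr hm]

theorem Provable.locallyValid (hΦ : Provable S Φ) (hS : ∀ Ξ ∈ S, Ξ.LocallySound) :
    Φ.LocallyValid := by
  obtain ⟨P, hP⟩ := hΦ
  intro D I hI ρ hρ
  have hhyps : ∀ h ∈ Φ.hyps, h.Holds (I.freeze Φ.OC ρ) ρ := fun h hh ↦
    (MF.holds_freeze_iff fun _ hm ↦ .inl ⟨h, hh, hm⟩).2 (hρ h hh)
  exact (MF.holds_freeze_iff Set.subset_union_right).1 (hP.holds hS (hI.freeze P ρ) hhyps)

end Soundness

/-! ### Local soundness of the axiom schemes -/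

section Axioms

variable {σ : Subst} {Φ : Scheme} {i j k : ℕ}

theorem Subst.Legit.vr_ne (hσ : σ.Legit Φ) (hij : s(MV.vr i, MV.vr j) ∈ Φ.dv) :
    σ.vr i ≠ σ.vr j := by
  intro heq
  simpa [Subst.appMV, heq] using hσ _ _ hij

theorem Subst.Legit.vr_notMem_OC (hσ : σ.Legit Φ) (hik : s(MV.vr i, MV.fm k) ∈ Φ.dv) :
    MV.vr (σ.vr i) ∉ (σ.fm k).OC := by
  simpa [Subst.appMV] using hσ _ _ hik

theorem Interp.Respects.dependsOn_holds_fm {D : Type} {I : Interp D}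
    (hI : I.Respects (σ.dvMap Φ.dv)) (hσ : σ.Legit Φ) (hik : s(MV.vr i, MV.fm k) ∈ Φ.dv) :
    DependsOn ((σ.fm k).Holds I) {σ.vr i}ᶜ :=
  (σ.fm k).dependsOn_holds
    (fun _ hj hji ↦ hσ.vr_notMem_OC hik (hji ▸ hj))
    fun l hl ↦ hI (σ.vr i) l ⟨_, _, _, _, hik, rfl, hl, rfl⟩

theorem locallySound_ax_mp : ax_mp.LocallySound := by
  intro σ _ D I _ ρ hρ
  have hminor : (σ.fm 0).Holds I ρ := hρ _ (by simp [Scheme.substS, ax_mp, MF.substMF])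
  have hmajor : (MF.imp (σ.fm 0) (σ.fm 1)).Holds I ρ :=
    hρ _ (by simp [Scheme.substS, ax_mp, MF.substMF])
  exact hmajor hminor

theorem locallySound_ax_minimp : ax_minimp.LocallySound := by
  intro σ _ D I _ ρ _
  simp only [Scheme.substS, ax_minimp, MF.substMF, MF.Holds]
  tauto

theorem locallySound_ax_peirce : ax_peirce.LocallySound := by
  intro σ _ D I _ ρ _
  simp only [Scheme.substS, ax_peirce, MF.substMF, MF.Holds]
  tauto

theorem locallySound_ax_contrap : ax_contrap.LocallySound := by
  intro σ _ D I _ ρ _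
  simp only [Scheme.substS, ax_contrap, MF.substMF, MF.Holds]
  tauto

theorem locallySound_ax_notelim : ax_notelim.LocallySound := by
  intro σ _ D I _ ρ _
  simp only [Scheme.substS, ax_notelim, MF.substMF, MF.Holds]
  tauto

theorem locallySound_ax_ALLdistr : ax_ALLdistr.LocallySound := by
  intro σ _ D I _ ρ _ himp hφ d
  exact himp d (hφ d)

theorem locallySound_ax_spec : ax_spec.LocallySound := by
  intro σ _ D I _ ρ _ hφ
  simpa only [Function.update_eq_self] using hφ (ρ (σ.vr 0))

theorem locallySound_ax_modal5 : ax_modal5.LocallySound := by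
  intro σ _ D I _ ρ _
  simp only [Scheme.substS, ax_modal5, MF.substMF, MF.Holds, Function.update_idem]
  exact fun hφ _ ↦ hφ

theorem locallySound_ax_vacGen : ax_vacGen.LocallySound := by
  intro σ hσ D I hI ρ _ hφ d
  have hdep : DependsOn ((σ.fm 0).Holds I) {σ.vr 0}ᶜ := hI.dependsOn_holds_fm hσ rfl
  exact (hdep fun i hi ↦ Function.update_of_ne hi d ρ).mpr hφ

theorem locallySound_ax_ALLcomm : ax_ALLcomm.LocallySound := by
  intro σ _ D I _ ρ _
  simp only [Scheme.substS, ax_ALLcomm, MF.substMF, MF.Holds]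
  intro hφ d e
  rcases eq_or_ne (σ.vr 0) (σ.vr 1) with hxy | hxy
  · simpa only [hxy] using hφ d e
  · rw [Function.update_comm hxy.symm]
    exact hφ e d

theorem locallySound_ax_EQrefl : ax_EQrefl.LocallySound :=
  fun _ _ _ _ _ _ _ ↦ rfl

theorem locallySound_ax_EQsymm : ax_EQsymm.LocallySound :=
  fun _ _ _ _ _ _ _ ↦ Eq.symm

theorem locallySound_ax_EQtrans : ax_EQtrans.LocallySound :=
  fun _ _ _ _ _ _ _ ↦ Eq.trans

theorem locallySound_ax_denot : ax_denot.LocallySound := by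
  intro σ hσ D I _ ρ _ _ hne
  have hxy : σ.vr 0 ≠ σ.vr 1 := hσ.vr_ne rfl
  apply hne (ρ (σ.vr 0))
  simp [MF.substMF, MF.Holds, hxy]

theorem locallySound_ax_subst : ax_subst.LocallySound := by
  intro σ hσ D I _ ρ _
  have hyx : σ.vr 1 ≠ σ.vr 0 := (hσ.vr_ne (.inl rfl)).symm
  simp only [Scheme.substS, ax_subst, MF.substMF, MF.Holds, Function.update_self,
    Function.update_of_ne hyx, Function.update_idem]
  rintro d rfl hφ e rfl
  exact hφ

theorem locallySound_ax_ALLeq : ax_ALLeq.LocallySound := by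
  intro σ _ D I _ ρ _
  simp only [Scheme.substS, ax_ALLeq, MF.substMF, MF.Holds, Function.update_self]
  intro heq hφ
  rcases eq_or_ne (σ.vr 1) (σ.vr 0) with hyx | hyx
  · rwa [hyx]
  · -- Distinct variables can only be equal for all values of one of them in a singleton domain.
    have hsingleton : ∀ d, d = ρ (σ.vr 1) := fun d ↦ by
      simpa only [Function.update_of_ne hyx] using heq d
    intro d
    have hφρ := hφ (ρ (σ.vr 0))
    rw [Function.update_eq_self] at hφρ
    rwa [hsingleton d, Function.update_eq_self]

theorem locallySound_ax_genEq : ax_genEq.LocallySound := by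
  intro σ _ D I _ ρ _
  simp only [Scheme.substS, ax_genEq, MF.substMF, MF.Holds, Function.update_self]
  intro hxy hxz hyz d
  have hyx : σ.vr 1 ≠ σ.vr 0 := fun h ↦ hxy fun e ↦ by rw [h, Function.update_self]
  have hzx : σ.vr 2 ≠ σ.vr 0 := fun h ↦ hxz fun e ↦ by rw [h, Function.update_self]
  rwa [Function.update_of_ne hyx, Function.update_of_ne hzx]

theorem locallySound_of_mem_TMM_diff_ax_gen {Ξ : Scheme} (hΞ : Ξ ∈ TMM \ {ax_gen}) :
    Ξ.LocallySound := by
  obtain ⟨hTMM, hgen⟩ := hΞ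
  rcases hTMM with rfl | rfl | rfl | rfl | rfl | rfl | rfl | rfl | rfl | rfl | rfl | rfl | rfl |
    rfl | rfl | rfl | rfl | rfl
  exacts [locallySound_ax_mp, locallySound_ax_minimp, locallySound_ax_peirce,
    locallySound_ax_contrap, locallySound_ax_notelim, absurd rfl hgen, locallySound_ax_ALLdistr,
    locallySound_ax_spec, locallySound_ax_modal5, locallySound_ax_vacGen, locallySound_ax_ALLcomm,
    locallySound_ax_EQrefl, locallySound_ax_EQsymm, locallySound_ax_EQtrans,
    locallySound_ax_denot, locallySound_ax_subst, locallySound_ax_ALLeq, locallySound_ax_genEq]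

end Axioms

theorem not_locallyValid_ax_gen : ¬ ax_gen.LocallyValid := by
  intro hgen
  have hforall : (MF.all 0 (.phi 0)).Holds (fun _ ρ ↦ ρ 0 = true) fun _ ↦ true :=
    hgen Bool _ (fun _ _ hik ↦ hik.elim) _ fun h hh ↦ by
      rw [Finset.mem_singleton.1 hh]
      rfl
  simpa [MF.Holds] using hforall false

/-- The rule of generalization is not provable from TMM ∖ {gen}. -/
theorem gen_independent : ¬ Provable (TMM \ {ax_gen}) ax_gen := fun hgen ↦
  not_locallyValid_ax_gen (hgen.locallyValid fun _ hΞ ↦ locallySound_of_mem_TMM_diff_ax_gen hΞ)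
end
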